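/- For every ε > 0 there exists a constant C > 0 such that for all integers k ≥ 3, every equinumerous t-coloring c of [t·n] with C · k^(2+ε) ≤ t and t·n < k^4 has at most t · C(n, 2) · k^(1+ε) arithmetic progressions of length k in [t·n] that are not rainbow with respect to c, where C(n, 2) = n(n−1)/2. -/

import Mathlib

/-- `c` is an equinumerous `t`-coloring of `[t*n] = {1, ..., t*n}`:
each color class `c⁻¹(i)` for `i ∈ {1, ..., t}` has exactly `n` elements. -/
def EquinumerousColoring (t n : ℕ) (c : ℕ → ℕ) : Prop :=
  ∀ i, 1 ≤ i → i ≤ t → ((Finset.Icc 1 (t * n)).filter (fun x => c x = i)).card = n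

/-- The arithmetic progression with first term `a`, common difference `d` and
length `k` is rainbow with respect to the coloring `c`. -/
def RainbowAP (k : ℕ) (c : ℕ → ℕ) (a d : ℕ) : Prop :=
  ∀ i < k, ∀ j < k, c (a + i * d) = c (a + j * d) → i = j

/-- The set of arithmetic progressions of length `k` contained in `[m]` that
are not rainbow with respect to `c`, encoded as pairs `(a, d)`. -/
def NonRainbowAPSet (m k : ℕ) (c : ℕ → ℕ) : Set (ℕ × ℕ) :=
  {p | 1 ≤ p.1 ∧ 1 ≤ p.2 ∧ p.1 + (k - 1) * p.2 ≤ m ∧ ¬ RainbowAP k c p.1 p.2}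

theorem divisor_local (δ : ℝ) (hδ : 0 < δ) (N : ℕ) (hN : 2 ≤ (N : ℝ) ^ δ) (p v : ℕ) (hp : 2 ≤ p) :
    ((v : ℝ) + 1) ≤ (if p < N then 1 + 1 / ((2 : ℝ) ^ δ - 1) else 1) * (((p : ℝ) ^ v) ^ δ) := by
  have h2 : (1 : ℝ) < (2 : ℝ) ^ δ := Real.one_lt_rpow (by norm_num) hδ
  have e : (((p : ℝ) ^ v) ^ δ) = ((p : ℝ) ^ δ) ^ v := by
    rw [← Real.rpow_natCast, ← Real.rpow_natCast, ← Real.rpow_mul (by positivity),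
      ← Real.rpow_mul (by positivity), mul_comm]
  rw [e]
  have hp2 : (2 : ℝ) ^ δ ≤ (p : ℝ) ^ δ :=
    Real.rpow_le_rpow (by norm_num) (by exact_mod_cast hp) hδ.le
  split_ifs with h
  · set s := (2 : ℝ) ^ δ - 1 with hs
    have hs0 : 0 < s := by linarith
    have h1 : 1 + (v : ℝ) * s ≤ ((p : ℝ) ^ δ) ^ v := by
      calc 1 + (v : ℝ) * s ≤ (1 + s) ^ v := one_add_mul_le_pow (by linarith) v
        _ ≤ _ := pow_le_pow_left₀ (by linarith) (by linarith) v
    have h3 : (1 + 1 / s) * (1 + (v : ℝ) * s) = v + 1 + v * s + 1 / s := by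
      field_simp
      ring
    have h4 : (1 + 1 / s) * (1 + (v : ℝ) * s) ≤ (1 + 1 / s) * ((p : ℝ) ^ δ) ^ v :=
      mul_le_mul_of_nonneg_left h1 (by positivity)
    have h5 : 0 ≤ (v : ℝ) * s := by positivity
    have h6 : 0 ≤ 1 / s := by positivity
    linarith
  · rw [one_mul]
    have h7 : (2 : ℝ) ≤ (p : ℝ) ^ δ :=
      hN.trans (Real.rpow_le_rpow (by positivity) (by exact_mod_cast not_lt.mp h) hδ.le)
    calc (v : ℝ) + 1 = 1 + v * 1 := by ring
      _ ≤ (1 + 1) ^ v := one_add_mul_le_pow (by norm_num) v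
      _ ≤ _ := pow_le_pow_left₀ (by norm_num) (by linarith) v

theorem divisor_bound (δ : ℝ) (hδ : 0 < δ) :
    ∃ K : ℝ, 0 < K ∧ ∀ m : ℕ, m ≠ 0 → ((m.divisors.card : ℕ) : ℝ) ≤ K * (m : ℝ) ^ δ := by
  obtain ⟨N, hN⟩ := exists_nat_ge ((2 : ℝ) ^ (1 / δ))
  have hN2 : 2 ≤ (N : ℝ) ^ δ := by
    calc (2 : ℝ) = ((2 : ℝ) ^ (1 / δ)) ^ δ := by
          rw [← Real.rpow_mul (by norm_num), one_div_mul_cancel hδ.ne', Real.rpow_one]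
      _ ≤ _ := Real.rpow_le_rpow (by positivity) hN hδ.le
  have h2 : (1 : ℝ) < (2 : ℝ) ^ δ := Real.one_lt_rpow (by norm_num) hδ
  set B : ℝ := 1 + 1 / ((2 : ℝ) ^ δ - 1) with hB
  have hB1 : 1 ≤ B := by
    have : 0 ≤ 1 / ((2 : ℝ) ^ δ - 1) := one_div_nonneg.mpr (by linarith)
    linarith
  refine ⟨B ^ N, by positivity, fun m hm => ?_⟩
  have hmr : (m : ℝ) ^ δ = ∏ p ∈ m.primeFactors, (((p : ℝ) ^ (m.factorization p)) ^ δ) := by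
    rw [Real.finsetProd_rpow _ _ (fun i _ => by positivity)]
    congr 1
    conv_lhs => rw [← Nat.prod_factorization_pow_eq_self hm]
    simp [Finsupp.prod]
  rw [Nat.card_divisors hm, hmr]
  push_cast
  calc ∏ p ∈ m.primeFactors, ((m.factorization p : ℝ) + 1)
      ≤ ∏ p ∈ m.primeFactors, ((if p < N then B else 1) * (((p : ℝ) ^ (m.factorization p)) ^ δ)) :=
        Finset.prod_le_prod (fun _ _ => by positivity) (fun p hp =>
          divisor_local δ hδ N hN2 p _ (Nat.prime_of_mem_primeFactors hp).two_le)
    _ = (∏ p ∈ m.primeFactors, (if p < N then B else 1)) *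
          ∏ p ∈ m.primeFactors, (((p : ℝ) ^ (m.factorization p)) ^ δ) := Finset.prod_mul_distrib
    _ ≤ _ := by
        refine mul_le_mul_of_nonneg_right ?_ (Finset.prod_nonneg fun _ _ => by positivity)
        rw [← Finset.prod_filter, Finset.prod_const]
        refine pow_le_pow_right₀ hB1 ?_
        calc _ ≤ (Finset.range N).card := Finset.card_le_card (fun p hp => by
              simp only [Finset.mem_filter] at hp
              exact Finset.mem_range.mpr hp.2)
          _ = N := Finset.card_range N

/-- The progressions having two terms in `s`. -/
def apThrough (M k : ℕ) (s : Finset ℕ) : Finset (ℕ × ℕ) :=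
  (Finset.Icc 1 M ×ˢ Finset.Icc 1 M).filter (fun p =>
    ∃ i < k, ∃ j < k, i < j ∧ p.1 + i * p.2 ∈ s ∧ p.1 + j * p.2 ∈ s)

theorem apThrough_card (M k x y : ℕ) (hxy : x < y) :
    (apThrough M k {x, y}).card ≤ k * (y - x).divisors.card := by
  have hsub : apThrough M k {x, y} ⊆ (Finset.range k ×ˢ (y - x).divisors).image
      (fun q => (x - q.1 * q.2, q.2)) := by
    rintro ⟨a, d⟩ hp
    simp only [apThrough, Finset.mem_filter, Finset.mem_product, Finset.mem_Icc,
      Finset.mem_insert, Finset.mem_singleton] at hp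
    obtain ⟨⟨⟨ha, _⟩, hd, _⟩, i, hi, j, hj, hij, h1, h2⟩ := hp
    have hlt : i * d < j * d := Nat.mul_lt_mul_of_pos_right hij hd
    have hx : a + i * d = x := by omega
    have hy : a + j * d = y := by omega
    simp only [Finset.mem_image, Finset.mem_product, Finset.mem_range, Nat.mem_divisors]
    refine ⟨(i, d), ⟨hi, ⟨j - i, ?_⟩, by omega⟩, ?_⟩
    · simp only
      rw [mul_comm, Nat.sub_mul]
      omega
    · simp only [Prod.mk.injEq, and_true]
      omega
  calc _ ≤ _ := Finset.card_le_card hsub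
    _ ≤ _ := Finset.card_image_le
    _ = _ := by rw [Finset.card_product, Finset.card_range]

theorem color_mem (t n : ℕ) (c : ℕ → ℕ) (hc : EquinumerousColoring t n c) (x : ℕ)
    (hx : x ∈ Finset.Icc 1 (t * n)) : c x ∈ Finset.Icc 1 t := by
  have h : (Finset.Icc 1 t).biUnion
      (fun i => (Finset.Icc 1 (t * n)).filter (fun x => c x = i)) = Finset.Icc 1 (t * n) := by
    refine Finset.eq_of_subset_of_card_le ?_ ?_
    · intro z hz
      simp only [Finset.mem_biUnion, Finset.mem_filter] at hz
      obtain ⟨_, _, h, _⟩ := hz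
      exact h
    · rw [Finset.card_biUnion]
      · rw [Finset.sum_congr rfl (fun i hi =>
          hc i (Finset.mem_Icc.mp hi).1 (Finset.mem_Icc.mp hi).2)]
        simp
      · intro i _ j _ hij
        simp only [Function.onFun]
        rw [Finset.disjoint_left]
        intro z h1 h2
        simp only [Finset.mem_filter] at h1 h2
        exact hij (h1.2.symm.trans h2.2)
  rw [← h] at hx
  simp only [Finset.mem_biUnion, Finset.mem_filter] at hx
  obtain ⟨i, hi, _, e⟩ := hx
  rwa [e]

theorem count_bound (k t n : ℕ) (hk : 3 ≤ k) (c : ℕ → ℕ) (hc : EquinumerousColoring t n c)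
    (D : ℕ) (hD : ∀ m : ℕ, m ≠ 0 → m < t * n → m.divisors.card ≤ D) :
    (NonRainbowAPSet (t * n) k c).ncard ≤ t * n.choose 2 * (k * D) := by
  set cls : ℕ → Finset ℕ := fun i => (Finset.Icc 1 (t * n)).filter (fun x => c x = i) with hcls
  set T := (Finset.Icc 1 t).biUnion (fun i =>
    ((cls i).powersetCard 2).biUnion (apThrough (t * n) k)) with hT
  have hsub : NonRainbowAPSet (t * n) k c ⊆ (T : Set (ℕ × ℕ)) := by
    rintro ⟨a, d⟩ ⟨ha, hd, hM, hr⟩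
    simp only at ha hd hM hr
    have key : ∃ i < k, ∃ j < k, i < j ∧ c (a + i * d) = c (a + j * d) := by
      unfold RainbowAP at hr
      push Not at hr
      obtain ⟨i, hi, j, hj, e, hne⟩ := hr
      rcases lt_or_gt_of_ne hne with h | h
      · exact ⟨i, hi, j, hj, h, e⟩
      · exact ⟨j, hj, i, hi, h, e.symm⟩
    obtain ⟨i, hi, j, hj, hij, e⟩ := key
    have hmem : ∀ l < k, a + l * d ∈ Finset.Icc 1 (t * n) := fun l hl => by
      have : l * d ≤ (k - 1) * d := Nat.mul_le_mul_right d (by omega)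
      rw [Finset.mem_Icc]
      omega
    have hdM : d ≤ t * n := by
      have := Finset.mem_Icc.mp (hmem 1 (by omega))
      omega
    have haM : a ≤ t * n := by omega
    have hlt : i * d < j * d := Nat.mul_lt_mul_of_pos_right hij hd
    simp only [hT, Finset.coe_biUnion, Set.mem_iUnion, Finset.mem_coe]
    refine ⟨c (a + i * d), color_mem t n c hc _ (hmem i hi), {a + i * d, a + j * d}, ?_, ?_⟩
    · rw [Finset.mem_powersetCard]
      refine ⟨?_, Finset.card_pair (by omega)⟩
      intro z hz
      simp only [Finset.mem_insert, Finset.mem_singleton] at hz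
      rcases hz with rfl | rfl
      · exact Finset.mem_filter.mpr ⟨hmem i hi, rfl⟩
      · exact Finset.mem_filter.mpr ⟨hmem j hj, e.symm⟩
    · simp only [apThrough, Finset.mem_filter, Finset.mem_product, Finset.mem_Icc]
      exact ⟨⟨⟨ha, haM⟩, hd, hdM⟩, i, hi, j, hj, hij, by simp, by simp⟩
  have h1 : (NonRainbowAPSet (t * n) k c).ncard ≤ T.card := by
    rw [← Set.ncard_coe_finset]
    exact Set.ncard_le_ncard hsub (Finset.finite_toSet T)
  refine h1.trans ?_
  have h2 : T.card ≤ (Finset.Icc 1 t).card * (n.choose 2 * (k * D)) := by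
    refine Finset.card_biUnion_le_card_mul _ _ _ (fun i hi => ?_)
    have hcard : (cls i).card = n := hc i (Finset.mem_Icc.mp hi).1 (Finset.mem_Icc.mp hi).2
    have h3 : ((cls i).powersetCard 2).card = n.choose 2 := by
      rw [Finset.card_powersetCard, hcard]
    rw [← h3]
    refine Finset.card_biUnion_le_card_mul _ _ _ (fun s hs => ?_)
    obtain ⟨hs1, hs2⟩ := Finset.mem_powersetCard.mp hs
    have main : ∀ x y, x < y → x ∈ cls i → y ∈ cls i →
        (apThrough (t * n) k {x, y}).card ≤ k * D := fun x y hxy hx hy => by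
      have hx' := Finset.mem_Icc.mp (Finset.mem_filter.mp hx).1
      have hy' := Finset.mem_Icc.mp (Finset.mem_filter.mp hy).1
      exact (apThrough_card _ k x y hxy).trans
        (Nat.mul_le_mul_left k (hD _ (by omega) (by omega)))
    obtain ⟨x, y, hne, rfl⟩ := Finset.card_eq_two.mp hs2
    have hx : x ∈ cls i := hs1 (by simp)
    have hy : y ∈ cls i := hs1 (by simp)
    rcases lt_or_gt_of_ne hne with h | h
    · exact main x y h hx hy
    · rw [Finset.pair_comm]
      exact main y x h hy hx
  rw [Nat.card_Icc, Nat.add_sub_cancel] at h2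
  rwa [mul_assoc]

/-- For every `ε > 0` there is a constant `C > 0` such that for all `k ≥ 3`,
every equinumerous `t`-coloring `c` of `[t*n]` with `C * k^(2+ε) ≤ t` and
`t*n < k^4` has at most `t * C(n,2) * k^(1+ε)` non-rainbow length-`k`
arithmetic progressions in `[t*n]`. -/
theorem card_nonrainbow_small_n (ε : ℝ) (hε : 0 < ε) :
    ∃ C : ℝ, 0 < C ∧ ∀ k : ℕ, 3 ≤ k → ∀ t n : ℕ, 0 < n →
      C * (k : ℝ) ^ ((2 : ℝ) + ε) ≤ (t : ℝ) → t * n < k ^ 4 →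
        ∀ c : ℕ → ℕ, EquinumerousColoring t n c →
          ((NonRainbowAPSet (t * n) k c).ncard : ℝ) ≤
            (t : ℝ) * (n.choose 2 : ℝ) * (k : ℝ) ^ ((1 : ℝ) + ε) := by
  obtain ⟨K, hK, hdiv⟩ := divisor_bound (ε / 8) (by positivity)
  refine ⟨K ^ (4 / ε), by positivity, ?_⟩
  intro k hk t n hn hCt htn c hc
  have hk0 : (0 : ℝ) < k := by
    have : 0 < k := by omega
    exact_mod_cast this
  have hk1 : (1 : ℝ) ≤ k := by
    have : 1 ≤ k := by omega
    exact_mod_cast this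
  have htk : (t : ℝ) < (k : ℝ) ^ 4 := by
    have : t < k ^ 4 := lt_of_le_of_lt (Nat.le_mul_of_pos_right t hn) htn
    exact_mod_cast this
  have hKk : K ≤ (k : ℝ) ^ (ε / 2) := by
    have h1 : K ^ (4 / ε) * (k : ℝ) ^ (2 : ℝ) ≤ (k : ℝ) ^ (2 : ℝ) * (k : ℝ) ^ (2 : ℝ) := by
      calc K ^ (4 / ε) * (k : ℝ) ^ (2 : ℝ) ≤ K ^ (4 / ε) * (k : ℝ) ^ ((2 : ℝ) + ε) :=
            mul_le_mul_of_nonneg_left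
              (Real.rpow_le_rpow_of_exponent_le hk1 (by linarith)) (by positivity)
        _ ≤ (k : ℝ) ^ 4 := hCt.trans htk.le
        _ = _ := by
          rw [Real.rpow_two]
          ring
    have h2 : K ^ (4 / ε) ≤ (k : ℝ) ^ (2 : ℝ) := le_of_mul_le_mul_right h1 (by positivity)
    have h3 := Real.rpow_le_rpow (by positivity) h2 (show 0 ≤ ε / 4 by positivity)
    rw [← Real.rpow_mul hK.le, ← Real.rpow_mul hk0.le] at h3
    have e1 : 4 / ε * (ε / 4) = 1 := by field_simp
    have e2 : 2 * (ε / 4) = ε / 2 := by ring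
    rwa [e1, e2, Real.rpow_one] at h3
  have hD : ∀ m : ℕ, m ≠ 0 → m < t * n → m.divisors.card ≤ ⌊(k : ℝ) ^ ε⌋₊ := by
    intro m hm hmlt
    refine Nat.le_floor ?_
    have hmk : (m : ℝ) ≤ (k : ℝ) ^ (4 : ℝ) := by
      have : m ≤ k ^ 4 := (hmlt.trans htn).le
      rw [show (4 : ℝ) = ((4 : ℕ) : ℝ) by norm_num, Real.rpow_natCast]
      exact_mod_cast this
    calc (m.divisors.card : ℝ) ≤ K * (m : ℝ) ^ (ε / 8) := hdiv m hm
      _ ≤ (k : ℝ) ^ (ε / 2) * ((k : ℝ) ^ (4 : ℝ)) ^ (ε / 8) := by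
          gcongr
      _ = (k : ℝ) ^ ε := by
          rw [← Real.rpow_mul hk0.le, ← Real.rpow_add hk0]
          congr 1
          ring
  have h := count_bound k t n hk c hc _ hD
  calc ((NonRainbowAPSet (t * n) k c).ncard : ℝ)
      ≤ ((t * n.choose 2 * (k * ⌊(k : ℝ) ^ ε⌋₊) : ℕ) : ℝ) := by exact_mod_cast h
    _ = (t : ℝ) * (n.choose 2 : ℝ) * ((k : ℝ) * (⌊(k : ℝ) ^ ε⌋₊ : ℝ)) := by push_cast; ring
    _ ≤ (t : ℝ) * (n.choose 2 : ℝ) * ((k : ℝ) * (k : ℝ) ^ ε) := by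
        gcongr
        exact Nat.floor_le (by positivity)
    _ = _ := by rw [Real.rpow_add hk0, Real.rpow_one]
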